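/- Let α > -1 and let 0 < q_1 < q_2 < … be the positive zeros of J_α. Suppose the family {j_α(q_k t)}_{k=1}^∞ is a Chebyshev system on (0,1) (i.e., any nontrivial linear combination of n of them, with consecutive or arbitrary indices among the first n, has at most n-1 zeros in (0,1)). Then the family {j_{α+1}(q_k t)}_{k=1}^∞ is also a Chebyshev system on (0,1). -/

import Mathlib

/-!
Write `c = 2(α + 1) > 0`, `F(t) = ∑ A_k j_{α+1}(q_k t)` and `H(t) = ∑ A_k j_α(q_k t)`. The Bessel
identity `j_α(x) = j_{α+1}(x) + x j_{α+1}'(x) / c` (`besselJ_eq`) gives `H(t) = F(t) + t F'(t) / c`,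
that is, `(t^c F(t))' = c t^(c-1) H(t)` for `t > 0`.

Suppose `F` vanishes on a finite set of points of `(0,1)` with total multiplicity `N`. At a zero of
multiplicity `m` of `F`, the function `H` has a zero of multiplicity at least `m - 1`
(`iteratedDeriv_euler`). Moreover `t^c F(t)` vanishes at `0` as well, so Rolle's theorem gives a
further zero of `H` strictly between each zero of `F` and its predecessor among `0` and the zeros of
`F` (`exists_zero_between`). Hence `H` also has total multiplicity at least `N`
(`exists_zeros_euler`), and the Chebyshev property of the functions `j_α(q_k t)` bounds `N` by
`n - 1`.

Smoothness of `j_α` comes from `j_α(x) = g_α(x² / 4)` with `g_α` entire and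
`g_α' = -g_{α+1} / (α + 1)`, which can be iterated.
-/

open Finset

/-- The normalized Bessel function `j_α`, given by its power series. -/
noncomputable def besselJ (α : ℝ) (x : ℝ) : ℝ :=
  ∑' k : ℕ, (-1 : ℝ) ^ k * Real.Gamma (α + 1) * (x / 2) ^ (2 * k) /
    ((Nat.factorial k : ℝ) * Real.Gamma ((k : ℝ) + α + 1))

/-- A family `φ_1, φ_2, …` of functions is a Chebyshev system on `(0,1)`:
every nontrivial linear combination of the first `n` functions has at most `n - 1`
zeros in `(0,1)`, counted with multiplicity. -/
def IsChebyshevSystem (φ : ℕ → ℝ → ℝ) : Prop :=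
  ∀ (n : ℕ) (A : Fin n → ℝ), (∃ k, A k ≠ 0) →
    ∀ (S : Finset ℝ) (m : ℝ → ℕ),
      (∀ x ∈ S, x ∈ Set.Ioo (0:ℝ) 1) →
      (∀ x ∈ S, ∀ i < m x, iteratedDeriv i (fun t => ∑ k, A k * φ k t) x = 0) →
      ∑ x ∈ S, m x ≤ n - 1

/-- The `k`-th coefficient of the power series `g_α`, where `j_α(x) = g_α((x / 2)²)`. -/
noncomputable def besselCoeff (α : ℝ) (k : ℕ) : ℝ :=
  (-1 : ℝ) ^ k * Real.Gamma (α + 1) / ((Nat.factorial k : ℝ) * Real.Gamma ((k : ℝ) + α + 1))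

/-- The entire function `g_α` with `j_α(x) = g_α((x / 2)²)`. -/
noncomputable def besselG (α z : ℝ) : ℝ := ∑' k : ℕ, besselCoeff α k * z ^ k

lemma besselJ_eq_besselG (α x : ℝ) : besselJ α x = besselG α ((x / 2) ^ 2) := by
  unfold besselJ besselG besselCoeff
  congr 1
  ext k
  rw [pow_mul]
  ring

lemma besselCoeff_succ {α : ℝ} (hα : -1 < α) (k : ℕ) :
    ((k : ℝ) + 1) * besselCoeff α (k + 1) = -(1 / (α + 1)) * besselCoeff (α + 1) k := by
  have h1 : 0 < α + 1 := by linarith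
  have hk : (0 : ℝ) ≤ k := Nat.cast_nonneg k
  unfold besselCoeff
  have e1 : Real.Gamma (α + 1 + 1) = (α + 1) * Real.Gamma (α + 1) := Real.Gamma_add_one h1.ne'
  have e2 : ((k + 1 : ℕ) : ℝ) + α + 1 = (k : ℝ) + (α + 1) + 1 := by push_cast; ring
  have h3 : 0 < Real.Gamma ((k : ℝ) + (α + 1) + 1) := Real.Gamma_pos_of_pos (by linarith)
  have h4 : (0 : ℝ) < Nat.factorial k := by exact_mod_cast Nat.factorial_pos k
  rw [e1, e2, Nat.factorial_succ]
  push_cast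
  field_simp
  ring

lemma besselCoeff_shift {α : ℝ} (hα : -1 < α) (k : ℕ) :
    besselCoeff α k = besselCoeff (α + 1) k * (1 + k / (α + 1)) := by
  have h1 : 0 < α + 1 := by linarith
  have hk : (0 : ℝ) ≤ k := Nat.cast_nonneg k
  have h2 : 0 < (k : ℝ) + α + 1 := by linarith
  unfold besselCoeff
  have e1 : Real.Gamma (α + 1 + 1) = (α + 1) * Real.Gamma (α + 1) := Real.Gamma_add_one h1.ne'
  have e2 : Real.Gamma ((k : ℝ) + (α + 1) + 1)
      = ((k : ℝ) + α + 1) * Real.Gamma ((k : ℝ) + α + 1) := by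
    rw [← Real.Gamma_add_one h2.ne']
    ring_nf
  have h3 : 0 < Real.Gamma ((k : ℝ) + α + 1) := Real.Gamma_pos_of_pos h2
  have h4 : (0 : ℝ) < Nat.factorial k := by exact_mod_cast Nat.factorial_pos k
  rw [e1, e2]
  field_simp
  ring

lemma exists_besselCoeff_bound {α : ℝ} (hα : -1 < α) :
    ∃ C : ℝ, ∀ k, |besselCoeff α k| ≤ C / Nat.factorial k := by
  have h1 : 0 < α + 1 := by linarith
  have g1 := Real.Gamma_pos_of_pos h1
  have g2 : 0 < Real.Gamma (1 + α + 1) := Real.Gamma_pos_of_pos (by linarith)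
  -- `Γ(k + α + 1)` is nondecreasing in `k` only from `k = 1` on, since `α + 1` may be below `1`.
  have key : ∀ k : ℕ, Real.Gamma (1 + α + 1) ≤ Real.Gamma (((k + 1 : ℕ) : ℝ) + α + 1) := by
    intro k
    induction k with
    | zero => simp
    | succ k ih =>
      have hk : (0 : ℝ) ≤ k := Nat.cast_nonneg k
      have e : ((k + 1 + 1 : ℕ) : ℝ) + α + 1 = (((k + 1 : ℕ) : ℝ) + α + 1) + 1 := by
        push_cast; ring
      have hp : 1 ≤ ((k + 1 : ℕ) : ℝ) + α + 1 := by push_cast; linarith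
      have hp' : ((k + 1 : ℕ) : ℝ) + α + 1 ≠ 0 := by linarith
      rw [e, Real.Gamma_add_one hp']
      nlinarith
  set D := min (Real.Gamma (α + 1)) (Real.Gamma (1 + α + 1)) with hD
  have hDpos : 0 < D := lt_min g1 g2
  have hDle : ∀ k : ℕ, D ≤ Real.Gamma ((k : ℝ) + α + 1) := by
    intro k
    cases k with
    | zero => simp [hD]
    | succ k => exact (min_le_right _ _).trans (key k)
  refine ⟨Real.Gamma (α + 1) / D, fun k => ?_⟩
  have h4 : (0 : ℝ) < Nat.factorial k := by exact_mod_cast Nat.factorial_pos k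
  have h5 := hDpos.trans_le (hDle k)
  unfold besselCoeff
  rw [abs_div, abs_mul, abs_pow, abs_neg, abs_one, one_pow, one_mul, abs_of_pos g1,
    abs_of_pos (mul_pos h4 h5), div_div, mul_comm D]
  gcongr
  exact hDle k

lemma summable_besselCoeff {α : ℝ} (hα : -1 < α) (z : ℝ) :
    Summable fun k => besselCoeff α k * z ^ k := by
  obtain ⟨C, hC⟩ := exists_besselCoeff_bound hα
  refine Summable.of_norm_bounded ((Real.summable_pow_div_factorial |z|).mul_left C) fun k => ?_
  rw [Real.norm_eq_abs, abs_mul, abs_pow]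
  calc |besselCoeff α k| * |z| ^ k ≤ C / Nat.factorial k * |z| ^ k := by
        gcongr
        exact hC k
    _ = _ := by ring

lemma hasDerivAt_besselG {α : ℝ} (hα : -1 < α) (z : ℝ) :
    HasDerivAt (besselG α) (-(1 / (α + 1)) * besselG (α + 1) z) z := by
  obtain ⟨C, hC⟩ := exists_besselCoeff_bound hα
  set R := |z| + 1 with hR
  have hR0 : 0 ≤ R := by positivity
  have hu : Summable fun k : ℕ => C / Nat.factorial k * (k * R ^ (k - 1)) := by
    rw [← summable_nat_add_iff 1]
    refine ((Real.summable_pow_div_factorial R).mul_left C).congr fun k => ?_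
    have h4 : (0 : ℝ) < Nat.factorial k := by exact_mod_cast Nat.factorial_pos k
    rw [Nat.factorial_succ, Nat.add_sub_cancel]
    push_cast
    field_simp
  have hz : z ∈ Metric.ball (0 : ℝ) R := by simp [hR]
  have hd := hasDerivAt_tsum_of_isPreconnected (t := Metric.ball (0 : ℝ) R)
    (g := fun k z => besselCoeff α k * z ^ k)
    (g' := fun k z => besselCoeff α k * (k * z ^ (k - 1))) hu Metric.isOpen_ball
    (convex_ball _ _).isPreconnected
    (fun k y _ => (hasDerivAt_pow k y).const_mul _)
    (fun k y hy => by
      have hy' : |y| ≤ R := by simpa using (Metric.mem_ball.1 hy).le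
      rw [Real.norm_eq_abs, abs_mul, abs_mul, abs_pow, Nat.abs_cast]
      gcongr
      · exact (abs_nonneg _).trans (hC k)
      · exact hC k)
    hz (summable_besselCoeff hα z) hz
  refine hd.congr_deriv ?_
  have hs : Summable fun k : ℕ => besselCoeff α k * (k * z ^ (k - 1)) := by
    rw [← summable_nat_add_iff 1]
    refine ((summable_besselCoeff (α := α + 1) (by linarith) z).mul_left
      (-(1 / (α + 1)))).congr fun k => ?_
    rw [← mul_assoc, ← besselCoeff_succ hα]
    push_cast
    ring
  rw [hs.tsum_eq_zero_add, besselG, ← tsum_mul_left]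
  simp only [Nat.cast_zero, zero_mul, mul_zero, zero_add]
  congr 1
  ext k
  rw [← mul_assoc (-(1 / (α + 1))), ← besselCoeff_succ hα]
  push_cast
  ring

/-- The relation `g_α' = -g_{α+1} / (α + 1)` stays within the family, so it yields derivatives of
every order. -/
lemma contDiff_besselG (n : ℕ) : ∀ {α : ℝ}, -1 < α → ContDiff ℝ n (besselG α) := by
  induction n with
  | zero =>
    intro α hα
    exact contDiff_zero.2 (continuous_iff_continuousAt.2 fun z =>
      (hasDerivAt_besselG hα z).continuousAt)
  | succ n ih =>
    intro α hα
    push_cast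
    refine contDiff_succ_iff_deriv.2 ⟨fun z => (hasDerivAt_besselG hα z).differentiableAt,
      by simp, ?_⟩
    rw [funext fun z => (hasDerivAt_besselG hα z).deriv]
    exact contDiff_const.mul (ih (by linarith))

open scoped ContDiff in
lemma contDiff_besselJ {α : ℝ} (hα : -1 < α) : ContDiff ℝ ∞ (besselJ α) := by
  rw [funext (besselJ_eq_besselG α)]
  exact (contDiff_infty.2 fun n => contDiff_besselG n hα).comp (by fun_prop)

/-- The power series form of the Bessel identity: `g_α = g_{α+1} + z g_{α+1}' / (α + 1)`. -/
lemma besselG_eq {α : ℝ} (hα : -1 < α) (z : ℝ) :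
    besselG α z = besselG (α + 1) z + z / (α + 1) * deriv (besselG (α + 1)) z := by
  have hα1 : -1 < α + 1 := by linarith
  have hα2 : -1 < α + 1 + 1 := by linarith
  have s0 := summable_besselCoeff hα z
  have s1 := summable_besselCoeff hα1 z
  have s2 := summable_besselCoeff hα2 z
  rw [(hasDerivAt_besselG hα1 z).deriv]
  unfold besselG
  rw [s0.tsum_eq_zero_add, s1.tsum_eq_zero_add, ← tsum_mul_left, ← tsum_mul_left, add_assoc,
    ← Summable.tsum_add ((summable_nat_add_iff 1).2 s1) ((s2.mul_left _).mul_left _)]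
  congr 1
  · rw [besselCoeff_shift hα 0]
    simp
  · congr 1
    ext k
    rw [besselCoeff_shift hα (k + 1), ← mul_assoc (-(1 / (α + 1 + 1))), ← besselCoeff_succ hα1]
    push_cast
    ring

/-- The expanded form of `(t^{2α+2} j_{α+1}(t))' = 2(α+1) t^{2α+1} j_α(t)`. -/
lemma besselJ_eq {α : ℝ} (hα : -1 < α) (x : ℝ) :
    besselJ α x = besselJ (α + 1) x + x * deriv (besselJ (α + 1)) x / (2 * (α + 1)) := by
  have h1 : α + 1 ≠ 0 := by linarith
  have hd : HasDerivAt (besselJ (α + 1)) (deriv (besselG (α + 1)) ((x / 2) ^ 2) * (x / 2)) x := by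
    rw [funext (besselJ_eq_besselG (α + 1))]
    have hin : HasDerivAt (fun x : ℝ => (x / 2) ^ 2) (x / 2) x := by
      refine (((hasDerivAt_id' x).div_const 2).fun_pow 2).congr_deriv ?_
      norm_num
      ring
    exact (hasDerivAt_besselG (α := α + 1) (by linarith) _).differentiableAt.hasDerivAt.comp x hin
  rw [hd.deriv, besselJ_eq_besselG, besselJ_eq_besselG, besselG_eq hα]
  field_simp

open scoped ContDiff in
/-- The operator `F ↦ F + t F' / c` lowers the multiplicity of a zero by at most one, because its
`i`-th derivative involves only `F^(i)` and `F^(i+1)`. -/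
lemma iteratedDeriv_euler {F : ℝ → ℝ} (hF : ContDiff ℝ ∞ F) (c : ℝ) (i : ℕ) :
    iteratedDeriv i (fun t => F t + t * deriv F t / c) =
      fun t => (1 + i / c) * iteratedDeriv i F t + t * iteratedDeriv (i + 1) F t / c := by
  have hd : ∀ i t, HasDerivAt (iteratedDeriv i F) (iteratedDeriv (i + 1) F t) t := by
    intro i t
    rw [iteratedDeriv_succ]
    exact (hF.differentiable_iteratedDeriv i (by exact_mod_cast WithTop.coe_lt_top _) t).hasDerivAt
  induction i with
  | zero => simp [iteratedDeriv_one]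
  | succ i ih =>
    rw [iteratedDeriv_succ, ih]
    ext t
    refine (((hd i t).const_mul _).add
      (((hasDerivAt_id t).mul (hd (i + 1) t)).div_const c)).deriv.trans ?_
    simp only [id]
    push_cast
    ring

/-- Rolle's theorem for `t^c F(t)`, which also vanishes at `0` because `c > 0`. -/
lemma exists_zero_between {F : ℝ → ℝ} (hF : Differentiable ℝ F) {c : ℝ} (hc : 0 < c) {a b : ℝ}
    (ha : 0 ≤ a) (hab : a < b) (h0 : a = 0 ∨ F a = 0) (hb : F b = 0) :
    ∃ y ∈ Set.Ioo a b, F y + y * deriv F y / c = 0 := by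
  have hcont : Continuous fun t : ℝ => t ^ c * F t :=
    (Real.continuous_rpow_const hc.le).mul hF.continuous
  have hends : a ^ c * F a = b ^ c * F b := by
    rcases h0 with h | h
    · rw [h, Real.zero_rpow hc.ne', hb]
      simp
    · rw [h, hb]
      simp
  obtain ⟨y, hy, hy0⟩ := exists_hasDerivAt_eq_zero (f := fun t : ℝ => t ^ c * F t)
    (f' := fun t => c * t ^ (c - 1) * F t + t ^ c * deriv F t) hab hcont.continuousOn hends
    (fun t ht => (Real.hasDerivAt_rpow_const (Or.inl (ha.trans_lt ht.1).ne')).mul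
      (hF t).hasDerivAt)
  refine ⟨y, hy, ?_⟩
  have hy1 : 0 < y := ha.trans_lt hy.1
  have hp : 0 < y ^ (c - 1) := Real.rpow_pos_of_pos hy1 _
  have e : y ^ c = y ^ (c - 1) * y := by
    rw [← Real.rpow_add_one hy1.ne']
    ring_nf
  rw [e] at hy0
  have h2 : c * y ^ (c - 1) * (F y + y * deriv F y / c) = 0 := by
    rw [← hy0]
    field_simp
  exact (mul_eq_zero.1 h2).resolve_left (by positivity)

open scoped ContDiff in
/-- The total multiplicity of zeros in `(0,1)` does not decrease under `F ↦ F + t F' / c`: each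
zero of `F` loses at most one order, and Rolle's theorem gives one new zero just to its left. -/
lemma exists_zeros_euler {F : ℝ → ℝ} (hF : ContDiff ℝ ∞ F) {c : ℝ} (hc : 0 < c)
    (S : Finset ℝ) (m : ℝ → ℕ) (hS : ∀ x ∈ S, x ∈ Set.Ioo (0 : ℝ) 1)
    (hm : ∀ x ∈ S, 1 ≤ m x) (hz : ∀ x ∈ S, ∀ i < m x, iteratedDeriv i F x = 0) :
    ∃ (S' : Finset ℝ) (m' : ℝ → ℕ), (∀ x ∈ S', x ∈ Set.Ioo (0 : ℝ) 1) ∧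
      (∀ x ∈ S', ∀ i < m' x, iteratedDeriv i (fun t => F t + t * deriv F t / c) x = 0) ∧
      ∑ x ∈ S', m' x = ∑ x ∈ S, m x := by
  classical
  have hF0 : ∀ x ∈ S, F x = 0 := fun x hx => by simpa using hz x hx 0 (hm x hx)
  -- The lower bound on `y` says that `y` lies above the predecessor of `x` in `S`.
  have hex : ∀ x ∈ S, ∃ y, 0 < y ∧ y < x ∧ (∀ s ∈ S, s < x → s < y) ∧
      F y + y * deriv F y / c = 0 := by
    intro x hx
    set T := insert 0 (S.filter (· < x)) with hT
    have hne : T.Nonempty := Finset.insert_nonempty _ _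
    set a := T.max' hne with ha
    have haT : a ∈ T := T.max'_mem hne
    have ha0 : 0 ≤ a := T.le_max' 0 (by simp [hT])
    have hcases : a = 0 ∨ a ∈ S ∧ a < x := by simpa [hT] using haT
    have hax : a < x := hcases.elim (fun h => h ▸ (hS x hx).1) fun h => h.2
    obtain ⟨y, hy, hy0⟩ := exists_zero_between (hF.differentiable (by simp)) hc ha0 hax
      (hcases.imp_right fun h => hF0 a h.1) (hF0 x hx)
    exact ⟨y, ha0.trans_lt hy.1, hy.2,
      fun s hs hsx => (T.le_max' s (by simp [hT, hs, hsx])).trans_lt hy.1, hy0⟩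
  choose! y hy0 hyx hys hyz using hex
  have hinj : Set.InjOn y S := by
    intro u hu v hv huv
    by_contra hne
    rcases lt_or_gt_of_ne hne with h | h
    · linarith [hys v hv u hu h, hyx u hu]
    · linarith [hys u hu v hv h, hyx v hv]
  have hnot : ∀ x ∈ S, y x ∉ S := fun x hx h => lt_irrefl _ (hys x hx _ h (hyx x hx))
  have hdisj : Disjoint S (S.image y) := by
    rw [Finset.disjoint_right]
    intro u hu
    obtain ⟨x, hx, rfl⟩ := Finset.mem_image.1 hu
    exact hnot x hx
  refine ⟨S ∪ S.image y, fun x => if x ∈ S then m x - 1 else 1, ?_, ?_, ?_⟩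
  · intro u hu
    rcases Finset.mem_union.1 hu with hu | hu
    · exact hS u hu
    · obtain ⟨x, hx, rfl⟩ := Finset.mem_image.1 hu
      exact ⟨hy0 x hx, (hyx x hx).trans (hS x hx).2⟩
  · intro u hu i hi
    rcases Finset.mem_union.1 hu with hu | hu
    · simp only [hu, if_true] at hi
      rw [iteratedDeriv_euler hF]
      simp [hz u hu i (by omega), hz u hu (i + 1) (by omega)]
    · obtain ⟨x, hx, rfl⟩ := Finset.mem_image.1 hu
      simp only [hnot x hx, if_false, Nat.lt_one_iff] at hi
      subst hi
      simpa using hyz x hx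
  · rw [Finset.sum_union hdisj, Finset.sum_image hinj, ← Finset.sum_add_distrib]
    refine Finset.sum_congr rfl fun x hx => ?_
    have := hm x hx
    simp only [hx, hnot x hx, if_true, if_false]
    omega

open scoped ContDiff

/-- If `{j_α(q_k t)}` is a Chebyshev system on `(0,1)` (where `q_1 < q_2 < ⋯` are
positive zeros of `j_α`), then so is `{j_{α+1}(q_k t)}`. -/
theorem chebyshev_step (α : ℝ) (hα : α > -1) (q : ℕ → ℝ)
    (hpos : ∀ k, 0 < q k) (hmono : StrictMono q)
    (hzero : ∀ k, besselJ α (q k) = 0)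
    (hcheb : IsChebyshevSystem (fun k t => besselJ α (q k * t))) :
    IsChebyshevSystem (fun k t => besselJ (α + 1) (q k * t)) := by
  intro n A hA S m hS hz
  have hα1 : -1 < α + 1 := by linarith
  have hf : ∀ k : Fin n, ContDiff ℝ ∞ fun t => A k * besselJ (α + 1) (q k * t) := fun k =>
    contDiff_const.mul ((contDiff_besselJ hα1).comp (by fun_prop))
  have hF : ContDiff ℝ ∞ fun t => ∑ k : Fin n, A k * besselJ (α + 1) (q k * t) :=
    ContDiff.sum fun k _ => hf k
  -- Points of multiplicity `0` carry no condition and are discarded before applying Rolle.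
  obtain ⟨S', m', hS', hz', hsum⟩ := exists_zeros_euler hF (c := 2 * (α + 1)) (by linarith)
    (S.filter fun x => m x ≠ 0) m (fun x hx => hS x (Finset.mem_filter.1 hx).1)
    (fun x hx => Nat.one_le_iff_ne_zero.2 (Finset.mem_filter.1 hx).2)
    (fun x hx => hz x (Finset.mem_filter.1 hx).1)
  have hEq : (fun t => (∑ k : Fin n, A k * besselJ (α + 1) (q k * t)) +
      t * deriv (fun t => ∑ k : Fin n, A k * besselJ (α + 1) (q k * t)) t / (2 * (α + 1))) =
      fun t => ∑ k : Fin n, A k * besselJ α (q k * t) := by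
    ext t
    have hd : HasDerivAt (fun t => ∑ k : Fin n, A k * besselJ (α + 1) (q k * t))
        (∑ k : Fin n, A k * (q k * deriv (besselJ (α + 1)) (q k * t))) t := by
      refine HasDerivAt.fun_sum fun k _ => HasDerivAt.const_mul _ ?_
      have h1 : HasDerivAt (fun t => q k * t) (q k) t := by
        simpa using (hasDerivAt_id t).const_mul (q k)
      have h2 := ((contDiff_besselJ hα1).differentiable (by simp) (q k * t)).hasDerivAt
      rw [mul_comm (q k)]
      exact h2.comp t h1
    rw [hd.deriv, Finset.mul_sum, Finset.sum_div, ← Finset.sum_add_distrib]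
    refine Finset.sum_congr rfl fun k _ => ?_
    rw [besselJ_eq hα]
    ring
  rw [hEq] at hz'
  have := hcheb n A hA S' m' hS' hz'
  rwa [hsum, Finset.sum_filter_ne_zero] at this
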